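/- Let L > 0, T > 0, and let (θ, u) be a classical solution of the homogeneous linearized KdV–KdV system on [0,T] × [0,L] which in addition has continuous fourth-order spatial derivatives and continuous mixed derivatives ∂_t ∂_x θ, ∂_t ∂_x u on [0,T] × [0,L]. Then (1/2)·∫₀^T [θ_{xx}(t,L)² + u_{xx}(t,L)² − θ_{xx}(t,0)² − u_{xx}(t,0)²] dt − ∫₀^L θ_x(T,x)·u_x(T,x) dx + ∫₀^L θ_x(0,x)·u_x(0,x) dx + (1/2)·∫₀^T θ_x(t,L)² dt − (1/2)·∫₀^T u_x(t,0)² dt = 0. -/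

import Mathlib

open Set MeasureTheory

/-- Partial derivative in the first (time) variable. -/
noncomputable def pt (f : ℝ → ℝ → ℝ) : ℝ → ℝ → ℝ := fun t x => deriv (fun s => f s x) t

/-- Partial derivative in the second (space) variable. -/
noncomputable def px (f : ℝ → ℝ → ℝ) : ℝ → ℝ → ℝ := fun t x => deriv (fun y => f t y) x

/-- `(θ, u)` is a classical solution of the homogeneous linearized KdV–KdV system on
`[0,T] × [0,L]`. -/
def IsClassicalSolution (L T : ℝ) (θ u : ℝ → ℝ → ℝ) : Prop :=
  (∀ x, Differentiable ℝ fun t => θ t x) ∧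
  (∀ x, Differentiable ℝ fun t => u t x) ∧
  (∀ t, ContDiff ℝ 3 (θ t)) ∧
  (∀ t, ContDiff ℝ 3 (u t)) ∧
  ContinuousOn (fun q : ℝ × ℝ => θ q.1 q.2) (Icc 0 T ×ˢ Icc 0 L) ∧
  ContinuousOn (fun q : ℝ × ℝ => u q.1 q.2) (Icc 0 T ×ˢ Icc 0 L) ∧
  ContinuousOn (fun q : ℝ × ℝ => pt θ q.1 q.2) (Icc 0 T ×ˢ Icc 0 L) ∧
  ContinuousOn (fun q : ℝ × ℝ => pt u q.1 q.2) (Icc 0 T ×ˢ Icc 0 L) ∧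
  ContinuousOn (fun q : ℝ × ℝ => px θ q.1 q.2) (Icc 0 T ×ˢ Icc 0 L) ∧
  ContinuousOn (fun q : ℝ × ℝ => px u q.1 q.2) (Icc 0 T ×ˢ Icc 0 L) ∧
  ContinuousOn (fun q : ℝ × ℝ => px (px θ) q.1 q.2) (Icc 0 T ×ˢ Icc 0 L) ∧
  ContinuousOn (fun q : ℝ × ℝ => px (px u) q.1 q.2) (Icc 0 T ×ˢ Icc 0 L) ∧
  ContinuousOn (fun q : ℝ × ℝ => px (px (px θ)) q.1 q.2) (Icc 0 T ×ˢ Icc 0 L) ∧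
  ContinuousOn (fun q : ℝ × ℝ => px (px (px u)) q.1 q.2) (Icc 0 T ×ˢ Icc 0 L) ∧
  (∀ t ∈ Icc (0 : ℝ) T, ∀ x ∈ Icc (0 : ℝ) L,
    pt θ t x + px u t x + px (px (px u)) t x = 0) ∧
  (∀ t ∈ Icc (0 : ℝ) T, ∀ x ∈ Icc (0 : ℝ) L,
    pt u t x + px θ t x + px (px (px θ)) t x = 0) ∧
  (∀ t ∈ Icc (0 : ℝ) T, θ t 0 = 0 ∧ θ t L = 0 ∧ px θ t 0 = 0) ∧
  (∀ t ∈ Icc (0 : ℝ) T, u t 0 = 0 ∧ u t L = 0 ∧ px u t L = 0)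

lemma kdv_slice {T L : ℝ} {F : ℝ → ℝ → ℝ}
    (hc : ContinuousOn (fun q : ℝ × ℝ => F q.1 q.2) (Icc 0 T ×ˢ Icc 0 L))
    {t : ℝ} (ht : t ∈ Icc 0 T) : ContinuousOn (F t) (Icc 0 L) :=
  hc.comp (f := fun y : ℝ => (t, y)) (by fun_prop) (fun _ hy => ⟨ht, hy⟩)

lemma kdv_slice' {T L : ℝ} {F : ℝ → ℝ → ℝ}
    (hc : ContinuousOn (fun q : ℝ × ℝ => F q.1 q.2) (Icc 0 T ×ˢ Icc 0 L))
    {x : ℝ} (hx : x ∈ Icc 0 L) : ContinuousOn (fun t => F t x) (Icc 0 T) :=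
  hc.comp (f := fun t : ℝ => (t, x)) (by fun_prop) (fun _ hy => ⟨hy, hx⟩)

/-- Differentiation under the integral sign. -/
lemma kdv_leibniz {T L : ℝ} (F : ℝ → ℝ → ℝ)
    (hcont : ∀ t, Continuous (F t)) (hd : ∀ x, Differentiable ℝ fun t => F t x)
    (hc : ContinuousOn (fun q : ℝ × ℝ => pt F q.1 q.2) (Icc 0 T ×ˢ Icc 0 L))
    {t x : ℝ} (ht : t ∈ Ioo 0 T) (hx : x ∈ Icc 0 L) :
    HasDerivAt (fun s => ∫ y in (0:ℝ)..x, F s y) (∫ y in (0:ℝ)..x, pt F t y) t := by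
  obtain ⟨C, hC⟩ := (isCompact_Icc.prod isCompact_Icc).exists_bound_of_continuousOn hc
  have hsub : Ioc 0 x ⊆ Icc 0 L := fun y hy => ⟨hy.1.le, hy.2.trans hx.2⟩
  have hI : uIoc 0 x = Ioc 0 x := uIoc_of_le hx.1
  refine (intervalIntegral.hasDerivAt_integral_of_dominated_loc_of_deriv_le (μ := volume)
    (F := F) (F' := pt F) (s := Icc 0 T) (bound := fun _ => C)
    (Icc_mem_nhds ht.1 ht.2) ?_ ?_ ?_ ?_ ?_ ?_).2
  · exact Filter.Eventually.of_forall fun s => (hcont s).aestronglyMeasurable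
  · exact (hcont t).intervalIntegrable _ _
  · rw [hI]
    exact ((kdv_slice hc (Ioo_subset_Icc_self ht)).mono hsub).aestronglyMeasurable
      measurableSet_Ioc
  · refine Filter.Eventually.of_forall fun y hy s hs => ?_
    rw [hI] at hy
    exact hC (s, y) ⟨hs, hsub hy⟩
  · exact intervalIntegrable_const
  · exact Filter.Eventually.of_forall fun y _ s _ => (hd y s).hasDerivAt

/-- Symmetry of the mixed derivatives. -/
lemma kdv_mixed {T L : ℝ} (f : ℝ → ℝ → ℝ)
    (hf : ∀ t, ContDiff ℝ 1 (f t)) (hd : ∀ x, Differentiable ℝ fun t => f t x)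
    (hdx : ∀ x, Differentiable ℝ fun t => px f t x)
    (hc : ContinuousOn (fun q : ℝ × ℝ => pt (px f) q.1 q.2) (Icc 0 T ×ˢ Icc 0 L))
    {t x : ℝ} (ht : t ∈ Ioo 0 T) (hx : x ∈ Ioo 0 L) (g : ℝ → ℝ) (g' : ℝ)
    (hg : ∀ y ∈ Icc 0 L, pt f t y = g y) (hg' : HasDerivAt g g' x) :
    pt (px f) t x = g' := by
  have hcx : ∀ t, Continuous (px f t) := fun t => (hf t).continuous_deriv le_rfl
  have key : ∀ y ∈ Icc 0 L, ∫ z in (0:ℝ)..y, pt (px f) t z = g y - pt f t 0 := by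
    intro y hy
    have h1 := kdv_leibniz (px f) hcx hdx hc ht hy
    have h2 : (fun s => ∫ z in (0:ℝ)..y, px f s z) = fun s => f s y - f s 0 := by
      funext s
      exact intervalIntegral.integral_eq_sub_of_hasDerivAt
        (fun z _ => ((hf s).differentiable one_ne_zero z).hasDerivAt)
        ((hcx s).intervalIntegrable _ _)
    rw [h2] at h1
    have h3 : HasDerivAt (fun s => f s y - f s 0) (pt f t y - pt f t 0) t :=
      (hd y t).hasDerivAt.sub (hd 0 t).hasDerivAt
    rw [← hg y hy]
    exact h1.unique h3
  have hs := kdv_slice hc (Ioo_subset_Icc_self ht)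
  have hn : Icc 0 L ∈ nhds x := Icc_mem_nhds hx.1 hx.2
  have h4 : HasDerivAt (fun y => ∫ z in (0:ℝ)..y, pt (px f) t z) (pt (px f) t x) x := by
    apply intervalIntegral.integral_hasDerivAt_right
    · apply ContinuousOn.intervalIntegrable
      rw [uIcc_of_le hx.1.le]
      exact hs.mono (Icc_subset_Icc le_rfl hx.2.le)
    · exact ⟨Icc 0 L, hn, hs.aestronglyMeasurable measurableSet_Icc⟩
    · exact hs.continuousAt hn
  have h5 : HasDerivAt (fun y => g y - pt f t 0) g' x := hg'.sub_const _
  refine h4.unique (h5.congr_of_eventuallyEq ?_)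
  filter_upwards [hn] with y hy using key y hy

/-- Fubini for the time derivative. -/
lemma kdv_fubini {T L : ℝ} (hT : 0 ≤ T) (hL : 0 ≤ L) (F G : ℝ → ℝ → ℝ)
    (hcont : ∀ t, Continuous (F t)) (hd : ∀ t x, HasDerivAt (fun t => F t x) (G t x) t)
    (hc : ContinuousOn (fun q : ℝ × ℝ => G q.1 q.2) (Icc 0 T ×ˢ Icc 0 L)) :
    ∫ t in (0:ℝ)..T, ∫ x in (0:ℝ)..L, G t x =
      (∫ x in (0:ℝ)..L, F T x) - ∫ x in (0:ℝ)..L, F 0 x := by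
  rw [intervalIntegral_intervalIntegral_swap, ← intervalIntegral.integral_sub
    ((hcont T).intervalIntegrable _ _) ((hcont 0).intervalIntegrable _ _)]
  · apply intervalIntegral.integral_congr
    intro x hx
    rw [uIcc_of_le hL] at hx
    refine intervalIntegral.integral_eq_sub_of_hasDerivAt (fun t _ => hd t x) ?_
    apply ContinuousOn.intervalIntegrable
    rw [uIcc_of_le hT]
    exact kdv_slice' hc hx
  · rw [uIoc_of_le hT, uIoc_of_le hL]
    exact (ContinuousOn.integrableOn_compact (isCompact_Icc.prod isCompact_Icc) hc).mono_set
      (prod_mono Ioc_subset_Icc_self Ioc_subset_Icc_self)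

lemma kdv_px {f : ℝ → ℝ → ℝ} {n : ℕ} (hf : ∀ t, ContDiff ℝ (n + 1) (f t)) :
    ∀ t, ContDiff ℝ n (px f t) := fun t => ((contDiff_succ_iff_deriv).1 (hf t)).2.2

lemma kdv_hd {f : ℝ → ℝ → ℝ} {n : ℕ} (hf : ∀ t, ContDiff ℝ (n + 1) (f t)) (t x : ℝ) :
    HasDerivAt (f t) (px f t x) x :=
  ((hf t).differentiable (by exact_mod_cast n.succ_ne_zero) x).hasDerivAt

/-- The boundary identity for a classical solution of the homogeneous linearized KdV–KdV
system which has, in addition, continuous fourth-order spatial derivatives and continuous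
mixed derivatives `∂_t ∂_x θ`, `∂_t ∂_x u` on `[0,T] × [0,L]`. -/
theorem statement_14 (L T : ℝ) (hL : 0 < L) (hT : 0 < T)
    (θ u : ℝ → ℝ → ℝ) (hsol : IsClassicalSolution L T θ u)
    (hθ4 : ∀ t, ContDiff ℝ 4 (θ t)) (hu4 : ∀ t, ContDiff ℝ 4 (u t))
    (hθ4c : ContinuousOn (fun q : ℝ × ℝ => px (px (px (px θ))) q.1 q.2) (Icc 0 T ×ˢ Icc 0 L))
    (hu4c : ContinuousOn (fun q : ℝ × ℝ => px (px (px (px u))) q.1 q.2) (Icc 0 T ×ˢ Icc 0 L))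
    (hθmix : ∀ x, Differentiable ℝ fun t => px θ t x)
    (humix : ∀ x, Differentiable ℝ fun t => px u t x)
    (hθmixc : ContinuousOn (fun q : ℝ × ℝ => pt (px θ) q.1 q.2) (Icc 0 T ×ˢ Icc 0 L))
    (humixc : ContinuousOn (fun q : ℝ × ℝ => pt (px u) q.1 q.2) (Icc 0 T ×ˢ Icc 0 L)) :
    (1/2) * (∫ t in (0:ℝ)..T,
        ((px (px θ) t L)^2 + (px (px u) t L)^2 - (px (px θ) t 0)^2 - (px (px u) t 0)^2))
      - (∫ x in (0:ℝ)..L, px θ T x * px u T x)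
      + (∫ x in (0:ℝ)..L, px θ 0 x * px u 0 x)
      + (1/2) * (∫ t in (0:ℝ)..T, (px θ t L)^2)
      - (1/2) * (∫ t in (0:ℝ)..T, (px u t 0)^2) = 0 := by
  obtain ⟨hθt, hut, -, -, -, -, -, -, cθ1, cu1, cθ2, cu2, -, -, e1, e2, bθ, bu⟩ := hsol
  have hL0 : (0:ℝ) ∈ Icc 0 L := ⟨le_rfl, hL.le⟩
  have hLL : L ∈ Icc 0 L := ⟨hL.le, le_rfl⟩
  have a0 : ∀ t, ContDiff ℝ ((3:ℕ) + 1) (θ t) := fun t => by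
    have := hθ4 t; norm_num; exact this
  have a1 : ∀ t, ContDiff ℝ ((2:ℕ) + 1) (px θ t) := fun t => by
    have := kdv_px a0 t; norm_num at this ⊢; exact this
  have a2 : ∀ t, ContDiff ℝ ((1:ℕ) + 1) (px (px θ) t) := fun t => by
    have := kdv_px a1 t; norm_num at this ⊢; exact this
  have a3 : ∀ t, ContDiff ℝ ((0:ℕ) + 1) (px (px (px θ)) t) := fun t => by
    have := kdv_px a2 t; norm_num at this ⊢; exact this
  have b0 : ∀ t, ContDiff ℝ ((3:ℕ) + 1) (u t) := fun t => by
    have := hu4 t; norm_num; exact this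
  have b1 : ∀ t, ContDiff ℝ ((2:ℕ) + 1) (px u t) := fun t => by
    have := kdv_px b0 t; norm_num at this ⊢; exact this
  have b2 : ∀ t, ContDiff ℝ ((1:ℕ) + 1) (px (px u) t) := fun t => by
    have := kdv_px b1 t; norm_num at this ⊢; exact this
  have b3 : ∀ t, ContDiff ℝ ((0:ℕ) + 1) (px (px (px u)) t) := fun t => by
    have := kdv_px b2 t; norm_num at this ⊢; exact this
  have mθ : ∀ t ∈ Ioo 0 T, ∀ x ∈ Ioo 0 L,
      pt (px θ) t x = -(px (px u) t x + px (px (px (px u))) t x) := by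
    intro t ht x hx
    refine kdv_mixed θ (fun t => (hθ4 t).of_le (by norm_num)) hθt hθmix hθmixc ht hx
      (fun y => -(px u t y + px (px (px u)) t y)) _ (fun y hy => ?_)
      ((kdv_hd b1 t x).add (kdv_hd b3 t x)).neg
    have := e1 t (Ioo_subset_Icc_self ht) y hy
    linarith
  have mu : ∀ t ∈ Ioo 0 T, ∀ x ∈ Ioo 0 L,
      pt (px u) t x = -(px (px θ) t x + px (px (px (px θ))) t x) := by
    intro t ht x hx
    refine kdv_mixed u (fun t => (hu4 t).of_le (by norm_num)) hut humix humixc ht hx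
      (fun y => -(px θ t y + px (px (px θ)) t y)) _ (fun y hy => ?_)
      ((kdv_hd a1 t x).add (kdv_hd a3 t x)).neg
    have := e2 t (Ioo_subset_Icc_self ht) y hy
    linarith
  have cG : ContinuousOn (fun q : ℝ × ℝ => (fun t x => pt (px θ) t x * px u t x
      + px θ t x * pt (px u) t x) q.1 q.2) (Icc 0 T ×ˢ Icc 0 L) :=
    (hθmixc.mul cu1).add (cθ1.mul humixc)
  have fub := kdv_fubini hT.le hL.le (fun t x => px θ t x * px u t x)
    (fun t x => pt (px θ) t x * px u t x + px θ t x * pt (px u) t x)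
    (fun t => (a1 t).continuous.mul (b1 t).continuous)
    (fun t x => (hθmix x t).hasDerivAt.mul (humix x t).hasDerivAt) cG
  -- boundary time derivatives
  have zero_pt : ∀ (f : ℝ → ℝ → ℝ) (x : ℝ), (∀ t ∈ Icc 0 T, f t x = 0) →
      ∀ t ∈ Ioo 0 T, pt f t x = 0 := by
    intro f x hf t ht
    have : (fun s => f s x) =ᶠ[nhds t] fun _ => 0 := by
      filter_upwards [Icc_mem_nhds ht.1 ht.2] with s hs using hf s hs
    simp only [pt]
    rw [this.deriv_eq]
    simp
  have inner : ∀ t ∈ Ioo 0 T, (∫ x in (0:ℝ)..L,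
      (pt (px θ) t x * px u t x + px θ t x * pt (px u) t x)) =
      (1/2) * ((px (px θ) t L)^2 + (px (px u) t L)^2 - (px (px θ) t 0)^2 - (px (px u) t 0)^2)
      + (1/2) * (px θ t L)^2 - (1/2) * (px u t 0)^2 := by
    intro t ht
    have ht' := Ioo_subset_Icc_self ht
    have hder : ∀ x, HasDerivAt (fun x => (1/2) * ((px (px θ) t x)^2 + (px (px u) t x)^2)
        - (1/2) * ((px θ t x)^2 + (px u t x)^2)
        - (px (px (px u)) t x * px u t x + px (px (px θ)) t x * px θ t x))
        (-(px (px u) t x + px (px (px (px u))) t x) * px u t x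
          + px θ t x * (-(px (px θ) t x + px (px (px (px θ))) t x))) x := by
      intro x
      have A1 := kdv_hd a1 t x
      have A2 := kdv_hd a2 t x
      have A3 := kdv_hd a3 t x
      have B1 := kdv_hd b1 t x
      have B2 := kdv_hd b2 t x
      have B3 := kdv_hd b3 t x
      refine (((((A2.pow 2).add (B2.pow 2)).const_mul (1/2)).sub
        (((A1.pow 2).add (B1.pow 2)).const_mul (1/2))).sub
        ((B3.mul B1).add (A3.mul A1))).congr_deriv ?_
      push_cast
      ring
    have hftc := intervalIntegral.integral_eq_sub_of_hasDerivAt_of_le hL.le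
      (f' := fun x => pt (px θ) t x * px u t x + px θ t x * pt (px u) t x)
      (fun x _ => (hder x).continuousAt.continuousWithinAt)
      (fun x hx => by rw [mθ t ht x hx, mu t ht x hx]; exact hder x)
      (by
        apply ContinuousOn.intervalIntegrable
        rw [uIcc_of_le hL.le]
        exact kdv_slice (F := fun t x => pt (px θ) t x * px u t x
          + px θ t x * pt (px u) t x) cG ht')
    rw [hftc]
    have p1 := e1 t ht' 0 hL0
    rw [zero_pt θ 0 (fun s hs => (bθ s hs).1) t ht] at p1
    have p2 := e2 t ht' L hLL
    rw [zero_pt u L (fun s hs => (bu s hs).2.1) t ht] at p2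
    have p3 : px (px (px u)) t 0 = - px u t 0 := by linarith
    have p4 : px (px (px θ)) t L = - px θ t L := by linarith
    simp only [p3, p4, (bθ t ht').2.2, (bu t ht').2.2]
    ring
  rw [intervalIntegral.integral_congr_Ioo_of_le hT.le inner] at fub
  have ii : ∀ F : ℝ → ℝ → ℝ, ContinuousOn (fun q : ℝ × ℝ => F q.1 q.2) (Icc 0 T ×ˢ Icc 0 L) →
      ∀ x ∈ Icc 0 L, ContinuousOn (fun t => (F t x)^2) (uIcc 0 T) := by
    intro F hF x hx
    rw [uIcc_of_le hT.le]
    exact (kdv_slice' hF hx).pow 2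
  have i1 := (((ii _ cθ2 L hLL).add (ii _ cu2 L hLL)).sub (ii _ cθ2 0 hL0)).sub (ii _ cu2 0 hL0)
  have i2 := (ii _ cθ1 L hLL)
  have i3 := (ii _ cu1 0 hL0)
  have j1 := i1.intervalIntegrable (μ := volume) |>.const_mul (1/2)
  have j2 := i2.intervalIntegrable (μ := volume) |>.const_mul (1/2)
  have j3 := i3.intervalIntegrable (μ := volume) |>.const_mul (1/2)
  erw [intervalIntegral.integral_sub (j1.add j2) j3, intervalIntegral.integral_add j1 j2] at fub
  simp only [intervalIntegral.integral_const_mul, Pi.add_apply, Pi.sub_apply] at fub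
  linarith
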